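/- arXiv:2010.07784 — 2 statements merged into one kernel-verified Lean document; each statement's English description precedes it below -/
import Mathlib

section
/- Let d ∈ (0, 1], ε ∈ (0, 1/2), and let 𝒬 be the set of Borel probability measures P on ℝ with P([−1,1]) = 1, ∫ z dP(z) = 0, and ∫ |z| dP(z) = d. Then for every real number c, the condition that P({z : c + z ≤ 0}) ≥ 1 − ε for all P ∈ 𝒬 holds if and only if c + min{1, d/(2ε)} ≤ 0. -/
/-!
Write `t = -c`. The chance constraint says that `P (z > t) ≤ ε` for all `P` in the ambiguity set.
Mean zero and mean absolute deviation `d` together mean that the positive part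
`z⁺ = (|z| + z) / 2` has expectation `d / 2`, so Markov's inequality gives
`P (z > t) ≤ d / (2 t) ≤ ε` when `t ≥ d / (2 ε)`; when `t ≥ 1` the event is null by the support
condition (`chance_of_le`).

Conversely, for `s ∈ (0, 1]` with `d / (2 s) + d / 2 ≤ 1`, the three-point distribution with mass
`d / (2 s)` at `s`, mass `d / 2` at `-1` and the remaining mass at `0` is in the ambiguity set
(`threePoint_mem`), and violates the constraint as soon as `s > t` and `d / (2 s) > ε`. If
`t < min 1 (d / (2 ε))`, such an `s` exists: `s = 1` when `d > 2 ε`, and any `s` strictly between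
`max t d` and `d / (2 ε)` otherwise.
-/

open MeasureTheory Set

/-- The mean-MAD ambiguity set `𝒬` of Borel probability measures on `ℝ` with
support contained in `[−1, 1]`, mean `0`, and mean absolute deviation `d`. -/
def symMeanMADSet (d : ℝ) : Set (Measure ℝ) :=
  {P | IsProbabilityMeasure P ∧ P (Icc (-1) 1) = 1 ∧
    (∫ z, z ∂P) = 0 ∧ (∫ z, |z| ∂P) = d}

/-- The distribution with mass `p` at `s`, mass `q` at `-1`, and mass `1 - p - q` at `0`; it is a
probability measure with these weights when `p, q ≥ 0` and `p + q ≤ 1`. -/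
noncomputable def threePoint (s p q : ℝ) : Measure ℝ :=
  ENNReal.ofReal p • Measure.dirac s + ENNReal.ofReal q • Measure.dirac (-1) +
    ENNReal.ofReal (1 - p - q) • Measure.dirac 0

lemma integral_threePoint {s p q : ℝ} (hp : 0 ≤ p) (hq : 0 ≤ q) (hpq : p + q ≤ 1) (f : ℝ → ℝ) :
    ∫ z, f z ∂(threePoint s p q) = p * f s + q * f (-1) + (1 - p - q) * f 0 := by
  have h (r a : ℝ) : Integrable f (ENNReal.ofReal r • Measure.dirac a) :=
    (integrable_dirac (by simp)).smul_measure ENNReal.ofReal_ne_top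
  have hr : 0 ≤ 1 - p - q := by linarith
  rw [threePoint, integral_add_measure ((h _ _).add_measure (h _ _)) (h _ _),
    integral_add_measure (h _ _) (h _ _)]
  simp only [integral_smul_measure, integral_dirac, ENNReal.toReal_ofReal hp,
    ENNReal.toReal_ofReal hq, ENNReal.toReal_ofReal hr, smul_eq_mul]

lemma isProbabilityMeasure_threePoint {s p q : ℝ} (hp : 0 ≤ p) (hq : 0 ≤ q) (hpq : p + q ≤ 1) :
    IsProbabilityMeasure (threePoint s p q) := by
  constructor
  have hr : 0 ≤ 1 - p - q := by linarith
  simp only [threePoint, Measure.add_apply, Measure.smul_apply, measure_univ, smul_eq_mul, mul_one]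
  rw [← ENNReal.ofReal_add hp hq, ← ENNReal.ofReal_add (by linarith) hr]
  simp

lemma threePoint_mem {d s : ℝ} (hd : 0 < d) (hs : 0 < s) (hs1 : s ≤ 1)
    (h : d / (2 * s) + d / 2 ≤ 1) : threePoint s (d / (2 * s)) (d / 2) ∈ symMeanMADSet d := by
  have hp : 0 ≤ d / (2 * s) := by positivity
  have hq : 0 ≤ d / 2 := by positivity
  have hprob := isProbabilityMeasure_threePoint (s := s) hp hq h
  refine ⟨hprob, ?_, ?_, ?_⟩
  · rw [← prob_compl_eq_zero_iff measurableSet_Icc]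
    have h1 : -1 ≤ s := by linarith
    simp [threePoint, h1, hs1]
  · rw [integral_threePoint hp hq h]
    field_simp
    ring
  · rw [integral_threePoint hp hq h]
    simp only [abs_of_pos hs, abs_neg, abs_one, abs_zero]
    field_simp
    ring

lemma threePoint_chance_le {c s p q : ℝ} (hp : 0 ≤ p) (hq : 0 ≤ q) (hpq : p + q ≤ 1)
    (hs : 0 < c + s) : ((threePoint s p q) {z | c + z ≤ 0}).toReal ≤ 1 - p := by
  have hprob := isProbabilityMeasure_threePoint (s := s) hp hq hpq
  have hsub : {z : ℝ | c + z ≤ 0} ⊆ {s}ᶜ := by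
    rintro z hz rfl
    exact absurd hz (not_le.mpr hs)
  have hmass : p ≤ (threePoint s p q).real {s} := by
    rw [measureReal_def, ← ENNReal.ofReal_le_iff_le_toReal (measure_ne_top _ _)]
    simp only [threePoint, Measure.add_apply, Measure.smul_apply, smul_eq_mul]
    rw [Measure.dirac_apply_of_mem (mem_singleton s), mul_one, add_assoc]
    exact le_self_add
  have hle : (threePoint s p q).real {z | c + z ≤ 0} ≤ (threePoint s p q).real {s}ᶜ :=
    measureReal_mono hsub
  rw [probReal_compl_eq_one_sub (measurableSet_singleton s)] at hle
  rw [← measureReal_def]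
  linarith

/-- The sufficient direction: Markov's inequality for the positive part of `z`, or the support
condition when `-c ≥ 1`. -/
lemma chance_of_le {d ε c : ℝ} (hd : 0 < d) (hε : 0 < ε) (hc : min 1 (d / (2 * ε)) ≤ -c)
    {P : Measure ℝ} (hP : P ∈ symMeanMADSet d) : 1 - ε ≤ (P {z | c + z ≤ 0}).toReal := by
  obtain ⟨hprob, hsupp, hmean, hmad⟩ := hP
  rw [← measureReal_def]
  rcases min_le_iff.mp hc with h1 | h2
  · have hsub : Icc (-1 : ℝ) 1 ⊆ {z | c + z ≤ 0} := fun z hz => by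
      have := hz.2
      simp only [mem_ofPred_eq]
      linarith
    have := measureReal_mono (μ := P) hsub
    rw [measureReal_def, hsupp, ENNReal.toReal_one] at this
    linarith
  · -- a nonzero Bochner integral forces integrability
    have hiabs : Integrable (fun z : ℝ => |z|) P :=
      Integrable.of_integral_ne_zero (by rw [hmad]; exact hd.ne')
    have hi : Integrable (fun z : ℝ => z) P :=
      (integrable_norm_iff measurable_id.aestronglyMeasurable).mp hiabs
    have hpos : ∫ z, (|z| + z) / 2 ∂P = d / 2 := by
      rw [integral_div, integral_add hiabs hi, hmean, hmad, add_zero]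
    have ht : 0 < -c := lt_of_lt_of_le (by positivity) h2
    have hmarkov := mul_meas_ge_le_integral_of_nonneg (μ := P) (f := fun z : ℝ => (|z| + z) / 2)
      (Filter.Eventually.of_forall fun z => by
        have := neg_abs_le z
        simp only [Pi.zero_apply]
        linarith) ((hiabs.add hi).div_const 2) (-c)
    rw [hpos] at hmarkov
    have hsub : {z : ℝ | c + z ≤ 0}ᶜ ⊆ {z : ℝ | -c ≤ (|z| + z) / 2} := fun z hz => by
      simp only [mem_compl_iff, mem_ofPred_eq, not_le] at hz ⊢
      have := le_abs_self z
      linarith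
    have hle := measureReal_mono (μ := P) hsub
    rw [probReal_compl_eq_one_sub (measurableSet_le (by fun_prop) (by fun_prop))] at hle
    have hdε : d / 2 ≤ -c * ε := by
      rw [div_le_iff₀ (by positivity)] at h2
      linarith
    have := le_of_mul_le_mul_left (hmarkov.trans hdε) ht
    linarith

lemma exists_violating_atom {d ε c : ℝ} (hd : d ∈ Ioc (0 : ℝ) 1) (hε : ε ∈ Ioo (0 : ℝ) (1 / 2))
    (hc : -c < min 1 (d / (2 * ε))) :
    ∃ s, 0 < s ∧ s ≤ 1 ∧ 0 < c + s ∧ d / (2 * s) + d / 2 ≤ 1 ∧ ε < d / (2 * s) := by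
  obtain ⟨hd0, hd1⟩ := hd
  obtain ⟨hε0, hε1⟩ := hε
  obtain ⟨hc1, hc2⟩ := lt_min_iff.mp hc
  by_cases h : 2 * ε < d
  · exact ⟨1, one_pos, le_rfl, by linarith, by linarith, by linarith⟩
  · have hdm : d < d / (2 * ε) := by
      rw [lt_div_iff₀ (by positivity)]
      nlinarith
    have hm1 : d / (2 * ε) ≤ 1 := by
      rw [div_le_one (by positivity)]
      linarith
    obtain ⟨s, hs, hsm⟩ := exists_between (max_lt hc2 hdm)
    obtain ⟨hcs, hds⟩ := max_lt_iff.mp hs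
    have hs0 : 0 < s := hd0.trans hds
    -- `s > d` keeps the upper mass below `1 / 2`, leaving room for the mass `d / 2 ≤ 1 / 2`
    have hhalf : d / (2 * s) ≤ 1 / 2 := by
      rw [div_le_iff₀ (by positivity)]
      linarith
    refine ⟨s, hs0, by linarith, by linarith, by linarith, ?_⟩
    rw [lt_div_iff₀ (by positivity)] at hsm ⊢
    linarith

/-- Theorem 10 (convex reformulation of an ambiguous chance constraint with
right-hand side uncertainty): `inf_{P ∈ 𝒬} P(c + Z ≤ 0) ≥ 1 − ε` if and only
if `c + min{1, d/(2ε)} ≤ 0`. -/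
theorem ambiguous_chance_constraint_rhs (d ε : ℝ)
    (hd : d ∈ Ioc (0 : ℝ) 1) (hε : ε ∈ Ioo (0 : ℝ) (1 / 2)) (c : ℝ) :
    (∀ P ∈ symMeanMADSet d, 1 - ε ≤ (P {z | c + z ≤ 0}).toReal) ↔
      c + min 1 (d / (2 * ε)) ≤ 0 := by
  constructor
  · intro h
    by_contra! hc
    obtain ⟨s, hs0, hs1, hcs, hmass, hεs⟩ := exists_violating_atom hd hε (by linarith : -c < _)
    have hd0 := hd.1
    have hlow := h _ (threePoint_mem hd0 hs0 hs1 hmass)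
    have hup := threePoint_chance_le (by positivity) (by positivity) hmass hcs
    linarith
  · intro hc P hP
    exact chance_of_le hd.1 hε.1 (by linarith) hP
end

section
/- Let d ∈ (0, 1], ε ∈ (0, 1/2), and let 𝒬 be the set of Borel probability measures P on ℝ with P([−1,1]) = 1, ∫ z dP(z) = 0, and ∫ |z| dP(z) = d. Let n ≥ 1, let ā, â ∈ ℝⁿ, x ∈ ℝⁿ, and h ∈ ℝ. Then the condition that P({z : (ā + z·â)ᵀx ≤ h}) ≥ 1 − ε for all P ∈ 𝒬 holds if and only if āᵀx + min{1, d/(2ε)}·|âᵀx| ≤ h. -/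
/-!
With `a = āᵀx`, `b = âᵀx` and `t = min 1 (d / (2ε))`, the constraint reads `a + b z ≤ h`, and
everything is symmetric under `z ↦ -z`; a sign `σ` with `b = σ |b|` removes the case distinction
on the sign of `b`.

Sufficiency: if `t = 1` the constraint holds on all of `[-1, 1]`. Otherwise a violation forces
`σ z > t`, and since the positive part `(|z| + σ z) / 2` of `σ z` has expectation `d / 2`, Markov's
inequality bounds the probability of a violation by `(d / 2) / t = ε` (`violation_le`).

Necessity: if `a + t |b| > h`, there is `u ∈ [d, 1]` with `u < d / (2ε)` and `a + u |b| > h`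
(`exists_violating_point`). The two-point law with mass `p = d / (2u) > ε` at `σ u` and the
remaining mass at `-σ d / (2(1 - p))` lies in the ambiguity set (`twoPoint_mem`), and it violates
the constraint with probability at least `p > ε`.
-/

open MeasureTheory Set

/-- The law with mass `p` at `y` and mass `1 - p` at `w`, for `p ∈ [0, 1]`. -/
noncomputable def twoPoint (p y w : ℝ) : Measure ℝ :=
  ENNReal.ofReal p • Measure.dirac y + ENNReal.ofReal (1 - p) • Measure.dirac w

theorem integral_twoPoint {p : ℝ} (hp : 0 ≤ p) (hp1 : p ≤ 1) (y w : ℝ) (f : ℝ → ℝ) :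
    ∫ z, f z ∂(twoPoint p y w) = p * f y + (1 - p) * f w := by
  unfold twoPoint
  have hi (c v : ℝ) : Integrable f (ENNReal.ofReal c • Measure.dirac v) :=
    (integrable_dirac (by simp)).smul_measure ENNReal.ofReal_ne_top
  rw [integral_add_measure (hi _ _) (hi _ _), integral_smul_measure, integral_smul_measure,
    integral_dirac, integral_dirac, ENNReal.toReal_ofReal hp,
    ENNReal.toReal_ofReal (by linarith)]
  simp

/-- The extremal law: mass `d / (2u)` at `σ u`, balanced by a single atom on the other side of `0`.
The bounds `d ≤ u ≤ 1` say that the mass is at most `1 / 2` and that both atoms lie in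
`[-1, 1]`. -/
theorem twoPoint_mem {d u σ : ℝ} (hd : 0 < d) (hdu : d ≤ u) (hu : u ≤ 1) (hσ : |σ| = 1) :
    twoPoint (d / (2 * u)) (σ * u) (-(σ * (d / (2 * (1 - d / (2 * u)))))) ∈ symMeanMADSet d := by
  have hu0 : 0 < u := hd.trans_le hdu
  set p := d / (2 * u) with hpdef
  have hpu : p * u = d / 2 := by rw [hpdef]; field_simp
  have hp0 : 0 < p := by positivity
  have hp2 : p ≤ 1 / 2 := by rw [hpdef, div_le_iff₀ (by positivity)]; linarith
  set v := d / (2 * (1 - p)) with hvdef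
  have hq : 0 < 1 - p := by linarith
  have hv0 : 0 < v := by positivity
  have hpv : (1 - p) * v = d / 2 := by rw [hvdef]; field_simp
  have hv1 : v ≤ 1 := by rw [hvdef, div_le_iff₀ (by positivity)]; linarith
  have hsum : ENNReal.ofReal p + ENNReal.ofReal (1 - p) = 1 := by
    rw [← ENNReal.ofReal_add hp0.le hq.le]; simp
  have hy : σ * u ∈ Icc (-1 : ℝ) 1 := by
    rw [mem_Icc, ← abs_le, abs_mul, hσ, abs_of_pos hu0]; linarith
  have hw : -(σ * v) ∈ Icc (-1 : ℝ) 1 := by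
    rw [mem_Icc, ← abs_le, abs_neg, abs_mul, hσ, abs_of_pos hv0]; linarith
  refine ⟨⟨?_⟩, ?_, ?_, ?_⟩
  · simp [twoPoint, hsum]
  · rw [twoPoint, Measure.add_apply, Measure.smul_apply, Measure.smul_apply,
      Measure.dirac_apply_of_mem hy, Measure.dirac_apply_of_mem hw]
    simpa using hsum
  · rw [integral_twoPoint hp0.le (by linarith)]
    linear_combination σ * hpu - σ * hpv
  · rw [integral_twoPoint hp0.le (by linarith), abs_neg, abs_mul, abs_mul, hσ, abs_of_pos hu0,
      abs_of_pos hv0]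
    linear_combination hpu + hpv

theorem exists_violating_point {d ε a B h : ℝ} (hd : 0 < d) (hd1 : d ≤ 1) (hε : 0 < ε)
    (hε2 : ε < 1 / 2) (hB : 0 ≤ B) (hlt : h < a + min 1 (d / (2 * ε)) * B) :
    ∃ u, d ≤ u ∧ u ≤ 1 ∧ u < d / (2 * ε) ∧ h < a + u * B := by
  have hdlt : d < d / (2 * ε) := by rw [lt_div_iff₀ (by positivity)]; nlinarith
  rcases hB.eq_or_lt with rfl | hB
  · exact ⟨d, le_rfl, hd1, hdlt, by simpa using hlt⟩
  set t := min 1 (d / (2 * ε))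
  have ht1 : t ≤ 1 := min_le_left _ _
  have ht2 : t ≤ d / (2 * ε) := min_le_right _ _
  have hs : (h - a) / B < t := by rw [div_lt_iff₀ hB]; linarith
  -- The midpoint is strictly below `t`; the maximum with `d` keeps the mass of `u` at most `1 / 2`.
  refine ⟨max d (((h - a) / B + t) / 2), le_max_left _ _, max_le hd1 (by linarith),
    max_lt hdlt (by linarith), ?_⟩
  have hlt' : (h - a) / B < max d (((h - a) / B + t) / 2) :=
    lt_max_of_lt_right (by linarith)
  rw [div_lt_iff₀ hB] at hlt'
  linarith

/-- Markov's inequality for the positive part of `σ z`, whose expectation is `d / 2` because the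
mean vanishes. -/
theorem violation_le {d σ t : ℝ} {P : Measure ℝ} (hP : P ∈ symMeanMADSet d) (hσ : |σ| = 1) :
    t * P.real {z | t ≤ (|z| + σ * z) / 2} ≤ d / 2 := by
  obtain ⟨hprob, hsupp, hmean, hmad⟩ := hP
  have hae : ∀ᵐ z ∂P, z ∈ Icc (-1 : ℝ) 1 :=
    (mem_ae_iff_prob_eq_one measurableSet_Icc).2 hsupp
  have hint : Integrable (fun z : ℝ => z) P :=
    Integrable.of_bound measurable_id.aestronglyMeasurable 1 (by
      filter_upwards [hae] with z hz
      exact abs_le.2 hz)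
  have hm := mul_meas_ge_le_integral_of_nonneg (μ := P) (f := fun z => (|z| + σ * z) / 2)
    (Filter.Eventually.of_forall fun z => by
      have := neg_abs_le (σ * z)
      rw [abs_mul, hσ] at this
      simp only [Pi.zero_apply]
      linarith) ((hint.abs.add (hint.const_mul σ)).div_const 2) t
  rwa [integral_div, integral_add hint.abs (hint.const_mul σ), integral_const_mul, hmean, hmad,
    mul_zero, add_zero] at hm

/-- Theorem 11 (convex reformulation of an ambiguous chance constraint that is
bilinear in the decision variable `x` and the uncertain parameter `Z`):
`inf_{P ∈ 𝒬} P((ā + Z·â)ᵀx ≤ h) ≥ 1 − ε` if and only if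
`āᵀx + min{1, d/(2ε)}·|âᵀx| ≤ h`. -/
theorem ambiguous_chance_constraint_bilinear (d ε : ℝ)
    (hd : d ∈ Ioc (0 : ℝ) 1) (hε : ε ∈ Ioo (0 : ℝ) (1 / 2))
    (n : ℕ) (hn : 1 ≤ n) (abar ahat x : Fin n → ℝ) (h : ℝ) :
    (∀ P ∈ symMeanMADSet d,
        1 - ε ≤ (P {z | (∑ i, (abar i + z * ahat i) * x i) ≤ h}).toReal) ↔
      (∑ i, abar i * x i) + min 1 (d / (2 * ε)) * |∑ i, ahat i * x i| ≤ h := by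
  obtain ⟨hd0, hd1⟩ := hd
  obtain ⟨hε0, hε2⟩ := hε
  have hlin (z : ℝ) : ∑ i, (abar i + z * ahat i) * x i
      = (∑ i, abar i * x i) + z * ∑ i, ahat i * x i := by
    rw [Finset.mul_sum, ← Finset.sum_add_distrib]
    exact Finset.sum_congr rfl fun i _ => by ring
  simp only [hlin]
  generalize (∑ i, abar i * x i) = a
  generalize (∑ i, ahat i * x i) = b
  obtain ⟨σ, hσ, hσb⟩ : ∃ σ : ℝ, |σ| = 1 ∧ σ * b = |b| := by
    rcases le_total 0 b with hb | hb
    · exact ⟨1, by simp, by rw [abs_of_nonneg hb, one_mul]⟩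
    · exact ⟨-1, by simp, by rw [abs_of_nonpos hb, neg_one_mul]⟩
  have hS : MeasurableSet {z : ℝ | a + z * b ≤ h} :=
    measurableSet_le (by fun_prop) measurable_const
  constructor
  · intro H
    by_contra! hlt
    obtain ⟨u, hdu, hu1, hut, hviol⟩ :=
      exists_violating_point hd0 hd1 hε0 hε2 (abs_nonneg b) hlt
    have hu0 : 0 < u := hd0.trans_le hdu
    have hεp : ε < d / (2 * u) := by
      rw [lt_div_iff₀ (by positivity)] at hut ⊢
      linarith
    have hp1 : d / (2 * u) ≤ 1 := by rw [div_le_iff₀ (by positivity)]; linarith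
    have hnot : σ * u ∉ {z : ℝ | a + z * b ≤ h} := by
      rw [mem_ofPred_eq, not_le, show σ * u * b = u * (σ * b) by ring, hσb]
      exact hviol
    have h1 := H _ (twoPoint_mem hd0 hdu hu1 hσ)
    have h2 (w : ℝ) :
        (twoPoint (d / (2 * u)) (σ * u) w {z : ℝ | a + z * b ≤ h}).toReal
          ≤ 1 - d / (2 * u) := by
      refine ENNReal.toReal_le_of_le_ofReal (by linarith) ?_
      rw [twoPoint, Measure.add_apply, Measure.smul_apply, Measure.smul_apply,
        Measure.dirac_apply' _ hS, indicator_of_notMem hnot, smul_zero, zero_add, smul_eq_mul]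
      exact mul_le_of_le_one_right' prob_le_one
    linarith [h2 (-(σ * (d / (2 * (1 - d / (2 * u))))))]
  · intro hle P hP
    have hprob : IsProbabilityMeasure P := hP.1
    change 1 - ε ≤ P.real _
    rcases le_total 1 (d / (2 * ε)) with ht | ht
    · rw [min_eq_left ht] at hle
      have hsub : Icc (-1 : ℝ) 1 ⊆ {z : ℝ | a + z * b ≤ h} := fun z hz => by
        have h1 : z * b ≤ |z| * |b| := (le_abs_self _).trans (abs_mul z b).le
        have h2 : |z| * |b| ≤ 1 * |b| :=
          mul_le_mul_of_nonneg_right (abs_le.2 hz) (abs_nonneg b)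
        rw [mem_ofPred_eq]
        linarith
      have h1 : P.real (Icc (-1 : ℝ) 1) = 1 := by rw [measureReal_def, hP.2.1]; simp
      linarith [measureReal_mono (μ := P) hsub]
    · rw [min_eq_right ht] at hle
      have ht0 : 0 < d / (2 * ε) := by positivity
      have hsub : {z : ℝ | a + z * b ≤ h}ᶜ ⊆ {z | d / (2 * ε) ≤ (|z| + σ * z) / 2} := by
        intro z hz
        rw [mem_compl_iff, mem_ofPred_eq, not_le] at hz
        have hb : b = σ * |b| := by
          rw [← hσb, ← mul_assoc, ← abs_mul_abs_self σ, hσ]; ring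
        have hlt : d / (2 * ε) * |b| < σ * z * |b| := by
          have : z * b = σ * z * |b| := by nth_rewrite 1 [hb]; ring
          linarith
        have h1 := lt_of_mul_lt_mul_right hlt (abs_nonneg b)
        have h2 := le_abs_self (σ * z)
        rw [abs_mul, hσ] at h2
        rw [mem_ofPred_eq]
        linarith
      have hm := violation_le (t := d / (2 * ε)) hP hσ
      have hmle : P.real {z | d / (2 * ε) ≤ (|z| + σ * z) / 2} ≤ ε := by
        refine le_of_mul_le_mul_left (hm.trans_eq ?_) ht0
        field_simp
      have hc := probReal_compl_eq_one_sub (μ := P) hS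
      linarith [measureReal_mono (μ := P) hsub]
end
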